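/- Let G = (N, 𝒳, 𝒰) be a finite game and 𝒪 = O_1 × ⋯ × O_n rectangular with each O_i nonempty. Then the minimum, over all payment promises 𝒱 that implement 𝒪 (i.e., with 𝒳⋆_{G[𝒱]} ⊆ 𝒪), of max_{o∈𝒪} Σ_{i∈N} V_i(o) equals min_{F∈ℱ} κ(F). Moreover, if in addition G is equitable with respect to 𝒪 (for every player i, |O_i| ≤ |𝒳₋ᵢ \ 𝒪₋ᵢ|), then the minimum δ ≥ 0 for which there exists a payment promise 𝒱 implementing 𝒪 exactly (𝒳⋆_{G[𝒱]} = 𝒪) with cost(𝒱) ≤ δ also equals min_{F∈ℱ} κ(F). -/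

import Mathlib

/-- In a game with player set `ι` and strategy sets `S i`, strategy `x` of player `i`
(weakly) dominates strategy `y`: `x` is at least as good against every profile of the
other players' strategies and strictly better against at least one. -/
def Dominates {ι : Type*} [DecidableEq ι] {S : ι → Type*}
    (U : ι → (∀ j, S j) → ℝ) (i : ι) (x y : S i) : Prop :=
  (∀ σ : ∀ j, S j, U i (Function.update σ i y) ≤ U i (Function.update σ i x)) ∧
  (∃ σ : ∀ j, S j, U i (Function.update σ i y) < U i (Function.update σ i x))

/-- A strategy of player `i` is undominated if no strategy of player `i` dominates it. -/
def Undominated {ι : Type*} [DecidableEq ι] {S : ι → Type*}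
    (U : ι → (∀ j, S j) → ℝ) (i : ι) (x : S i) : Prop :=
  ¬ ∃ y : S i, Dominates U i y x

/-- The set `𝒳⋆` of strategy profiles consisting entirely of undominated strategies. -/
def UndomProfiles {ι : Type*} [DecidableEq ι] {S : ι → Type*}
    (U : ι → (∀ j, S j) → ℝ) : Set (∀ j, S j) :=
  {σ | ∀ i, Undominated U i (σ i)}

/-- The cost of a payment promise `V` for the game with utilities `U`:
the maximum, over undominated profiles of the modified game `G[V]`,
of the total payment. -/
noncomputable def gameCost {ι : Type*} [DecidableEq ι] [Fintype ι] {S : ι → Type*}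
    (U V : ι → (∀ j, S j) → ℝ) : ℝ :=
  sSup ((fun σ => ∑ i, V i σ) '' UndomProfiles (fun i σ => U i σ + V i σ))

/-- The rectangular strategy-profile region `O_1 × ⋯ × O_n`. -/
def rectSet {ι : Type*} {S : ι → Type*} (O : ∀ i, Set (S i)) : Set (∀ j, S j) :=
  {σ | ∀ i, σ i ∈ O i}

/-- `F = (F_1, …, F_n)` is a valid family for the rectangular region `O`:
each `F_i` maps every strategy outside `O_i` into `O_i`
(its values on `O_i` are irrelevant). -/
def ValidF {ι : Type*} {S : ι → Type*} (O : ∀ i, Set (S i))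
    (F : ∀ i, S i → S i) : Prop :=
  ∀ i : ι, ∀ x : S i, x ∉ O i → F i x ∈ O i

/-- `max(0, max_{x_i ∈ F_i⁻¹(o_i), x_i ∉ O_i} (U_i(x_i, o₋ᵢ) − U_i(o_i, o₋ᵢ)))`,
with the inner maximum over the empty set taken to be 0. -/
noncomputable def innerPay {ι : Type*} [DecidableEq ι] {S : ι → Type*}
    (U : ι → (∀ j, S j) → ℝ) (O : ∀ i, Set (S i)) (F : ∀ i, S i → S i)
    (i : ι) (o : ∀ j, S j) : ℝ :=
  sSup (insert (0 : ℝ)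
    {r | ∃ x : S i, x ∉ O i ∧ F i x = o i ∧
      r = U i (Function.update o i x) - U i o})

/-- `κ(F) = max_{o ∈ 𝒪} Σ_{i ∈ N} innerPay i o`. -/
noncomputable def kappa {ι : Type*} [DecidableEq ι] [Fintype ι] {S : ι → Type*}
    (U : ι → (∀ j, S j) → ℝ) (O : ∀ i, Set (S i)) (F : ∀ i, S i → S i) : ℝ :=
  sSup ((fun o => ∑ i, innerPay U O F i o) '' rectSet O)

/-- The worst-case payment over the region `O`: `max_{o ∈ 𝒪} Σ_i V_i(o)`. -/
noncomputable def maxPay {ι : Type*} [Fintype ι] {S : ι → Type*}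
    (V : ι → (∀ j, S j) → ℝ) (O : ∀ i, Set (S i)) : ℝ :=
  sSup ((fun o => ∑ i, V i o) '' rectSet O)

/-- The game is equitable w.r.t. the rectangular region `O`: for each player `i`,
`|O_i| ≤ |𝒳₋ᵢ \ 𝒪₋ᵢ|`. -/
def Equitable {ι : Type*} {S : ι → Type*} (O : ∀ i, Set (S i)) : Prop :=
  ∀ i : ι, (O i).ncard ≤
    Set.ncard {σ : (j : {j : ι // j ≠ i}) → S j.1 | ∃ j, σ j ∉ O j.1}

/-!
Both equalities compare the payments of implementations with the values `κ(F)`.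

*Every implementation pays at least some `κ(F)` on `𝒪`.* If `V` implements `𝒪`, finiteness of the
game gives every `x ∉ O_i` a dominating strategy `F_i x ∈ O_i`. Comparing the two against `o₋ᵢ`, for
`o ∈ 𝒪` with `o_i = F_i x`, shows that `V_i(o)` is at least the gain
`U_i(x, o₋ᵢ) - U_i(o_i, o₋ᵢ)`.

*Every amount above `κ(F)` suffices.* Pay `innerPay + ε` on `𝒪` and, at no cost on `𝒪`, reward
strategies of `O_i` heavily against `𝒳₋ᵢ ∖ 𝒪₋ᵢ`, so that `F_i x` dominates each `x ∉ O_i`. The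
slack `ε` makes the domination strict even if `𝒳₋ᵢ ∖ 𝒪₋ᵢ` is empty. In an equitable game `O_i`
embeds into `𝒳₋ᵢ ∖ 𝒪₋ᵢ`, and a larger reward to `x ∈ O_i` against its own image makes `x` the unique
best reply there, hence undominated.
-/

theorem csInf_eq_csInf_of_forall_exists_le_of_dense {α : Type*}
    [ConditionallyCompleteLinearOrder α] [DenselyOrdered α] [NoMaxOrder α] {A B : Set α}
    (hB : B.Nonempty) (hB' : BddBelow B) (hAB : ∀ a ∈ A, ∃ b ∈ B, b ≤ a)
    (hBA : ∀ b ∈ B, ∀ c > b, ∃ a ∈ A, a ≤ c) : sInf A = sInf B := by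
  have hA : A.Nonempty := by
    obtain ⟨b, hb⟩ := hB
    obtain ⟨c, hc⟩ := exists_gt b
    obtain ⟨a, ha, -⟩ := hBA b hb c hc
    exact ⟨a, ha⟩
  refine IsGLB.csInf_eq ⟨fun a ha => ?_, fun m hm => le_csInf hB fun b hb => ?_⟩ hA
  · obtain ⟨b, hb, hba⟩ := hAB a ha
    exact (csInf_le hB' hb).trans hba
  · refine le_of_forall_gt_imp_ge_of_dense fun c hc => ?_
    obtain ⟨a, ha, hac⟩ := hBA b hb c hc
    exact (hm ha).trans hac

theorem exists_nonneg_forall_le_add {ι : Type*} {S : ι → Type*} [Finite ι]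
    [∀ i, Finite (S i)] (U : ι → (∀ j, S j) → ℝ) : ∃ M, 0 ≤ M ∧ ∀ i σ τ, U i τ ≤ U i σ + M := by
  obtain ⟨M, hM⟩ := Finite.bddAbove_range
    fun p : ι × (∀ j, S j) × (∀ j, S j) => U p.1 p.2.2 - U p.1 p.2.1
  refine ⟨max M 0, le_max_right M 0, fun i σ τ => ?_⟩
  have hgap : U i τ - U i σ ≤ M := hM ⟨(i, σ, τ), rfl⟩
  linarith [le_max_left M 0]

section MaxPay

variable {ι : Type*} {S : ι → Type*} {O : ∀ i, Set (S i)}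

theorem rectSet_nonempty (hO : ∀ i, (O i).Nonempty) : (rectSet O).Nonempty :=
  ⟨fun i => (hO i).some, fun i => (hO i).some_mem⟩

variable [Fintype ι] {V W : ι → (∀ j, S j) → ℝ}

theorem maxPay_nonneg (hV : 0 ≤ V) : 0 ≤ maxPay V O := by
  refine Real.sSup_nonneg ?_
  rintro _ ⟨o, -, rfl⟩
  exact Finset.sum_nonneg fun i _ => hV i o

theorem maxPay_le (hO : (rectSet O).Nonempty) {c : ℝ} (h : ∀ o ∈ rectSet O, ∑ i, V i o ≤ c) :
    maxPay V O ≤ c :=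
  csSup_le (hO.image _) (Set.forall_mem_image.2 h)

theorem sum_le_maxPay [∀ i, Finite (S i)] (V : ι → (∀ j, S j) → ℝ) {o : ∀ j, S j}
    (ho : o ∈ rectSet O) : ∑ i, V i o ≤ maxPay V O :=
  le_csSup (Set.toFinite _).bddAbove (Set.mem_image_of_mem _ ho)

theorem maxPay_mono [∀ i, Finite (S i)] (hO : (rectSet O).Nonempty) (hVW : V ≤ W) :
    maxPay V O ≤ maxPay W O :=
  maxPay_le hO fun o ho => (Finset.sum_le_sum fun i _ => hVW i o).trans (sum_le_maxPay W ho)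

theorem gameCost_eq_maxPay [DecidableEq ι] {U : ι → (∀ j, S j) → ℝ}
    (h : UndomProfiles (U + V) = rectSet O) : gameCost U V = maxPay V O :=
  congrArg (fun A => sSup ((fun σ => ∑ i, V i σ) '' A)) h

end MaxPay

section Dominance

variable {ι : Type*} [DecidableEq ι] {S : ι → Type*} {U : ι → (∀ j, S j) → ℝ}
  {O : ∀ i, Set (S i)} {i : ι} {x y z : S i}

theorem Dominates.trans (hxy : Dominates U i x y) (hyz : Dominates U i y z) :
    Dominates U i x z :=
  ⟨fun σ => (hyz.1 σ).trans (hxy.1 σ), hxy.2.imp fun σ hσ => (hyz.1 σ).trans_lt hσ⟩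

theorem not_dominates_self : ¬ Dominates U i x x := fun ⟨_, _, hσ⟩ => lt_irrefl _ hσ

theorem wellFounded_dominates [Finite (S i)] : WellFounded (Dominates U i) :=
  have : IsTrans (S i) (Dominates U i) := ⟨fun _ _ _ => Dominates.trans⟩
  have : Std.Irrefl (Dominates U i) := ⟨fun _ => not_dominates_self⟩
  Finite.wellFounded_of_trans_of_irrefl _

theorem exists_undominated [Finite (S i)] [Nonempty (S i)] : ∃ x, Undominated U i x := by
  obtain ⟨x, -, hx⟩ := (wellFounded_dominates (U := U) (i := i)).has_min _ Set.univ_nonempty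
  exact ⟨x, fun ⟨y, hy⟩ => hx y (Set.mem_univ y) hy⟩

theorem exists_undominated_dominates [Finite (S i)] (hx : ¬ Undominated U i x) :
    ∃ y, Undominated U i y ∧ Dominates U i y x := by
  obtain ⟨y, hyx, hy⟩ := wellFounded_dominates.has_min {y | Dominates U i y x} (not_not.1 hx)
  exact ⟨y, fun ⟨z, hzy⟩ => hy z (hzy.trans hyx) hzy, hyx⟩

theorem undominated_of_update_lt {σ : ∀ j, S j}
    (h : ∀ y ≠ σ i, U i (Function.update σ i y) < U i σ) : Undominated U i (σ i) := by
  rintro ⟨y, hy⟩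
  have hne : y ≠ σ i := by
    rintro rfl
    exact not_dominates_self hy
  have hle := hy.1 σ
  rw [Function.update_eq_self] at hle
  exact (h y hne).not_ge hle

theorem mem_of_undominated [∀ j, Finite (S j)] [∀ j, Nonempty (S j)]
    (h : UndomProfiles U ⊆ rectSet O) (hx : Undominated U i x) : x ∈ O i := by
  choose σ hσ using fun j => exists_undominated (U := U) (i := j)
  have hmem : Function.update σ i x ∈ UndomProfiles U :=
    (Function.forall_update_iff σ fun j z => Undominated U j z).2 ⟨hx, fun j _ => hσ j⟩
  simpa only [Function.update_self] using h hmem i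

theorem undomProfiles_subset_rectSet_iff [∀ j, Finite (S j)] [∀ j, Nonempty (S j)] :
    UndomProfiles U ⊆ rectSet O ↔ ∀ i, ∀ x ∉ O i, ∃ y ∈ O i, Dominates U i y x := by
  refine ⟨fun h i x hx => ?_, fun h σ hσ i => ?_⟩
  · obtain ⟨y, hy, hyx⟩ := exists_undominated_dominates (mt (mem_of_undominated h) hx)
    exact ⟨y, mem_of_undominated h hy, hyx⟩
  · by_contra hi
    obtain ⟨y, -, hy⟩ := h i _ hi
    exact hσ i ⟨y, hy⟩

end Dominance

section Kappa

variable {ι : Type*} [DecidableEq ι] {S : ι → Type*} {U V : ι → (∀ j, S j) → ℝ}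
  {O : ∀ i, Set (S i)} {F : ∀ i, S i → S i}

theorem innerPay_nonneg : 0 ≤ innerPay U O F :=
  fun _ _ => Real.sSup_nonneg' ⟨0, Set.mem_insert _ _, le_rfl⟩

theorem sub_le_innerPay {i : ι} [Finite (S i)] {x : S i} {o : ∀ j, S j} (hx : x ∉ O i)
    (hFx : F i x = o i) : U i (Function.update o i x) - U i o ≤ innerPay U O F i o := by
  refine le_csSup (BddAbove.insert 0 ?_) (Set.mem_insert_of_mem 0 ⟨x, hx, hFx, rfl⟩)
  refine (Set.finite_range fun z => U i (Function.update o i z) - U i o).bddAbove.mono ?_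
  rintro _ ⟨z, -, -, rfl⟩
  exact ⟨z, rfl⟩

theorem innerPay_le_of_dominates (hV : 0 ≤ V)
    (h : ∀ i, ∀ x ∉ O i, Dominates (U + V) i (F i x) x) : innerPay U O F ≤ V := by
  refine fun i o => csSup_le (Set.insert_nonempty _ _) ?_
  rintro _ (rfl | ⟨x, hx, hFx, rfl⟩)
  · exact hV i o
  · have hdom := (h i x hx).1 o
    rw [hFx, Function.update_eq_self] at hdom
    have hpay : 0 ≤ V i (Function.update o i x) := hV i _
    simp only [Pi.add_apply] at hdom
    linarith

variable [Fintype ι]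

theorem kappa_eq_maxPay_innerPay (U : ι → (∀ j, S j) → ℝ) (O : ∀ i, Set (S i))
    (F : ∀ i, S i → S i) : kappa U O F = maxPay (innerPay U O F) O := rfl

theorem kappa_nonneg : 0 ≤ kappa U O F := maxPay_nonneg innerPay_nonneg

theorem exists_kappa_le_maxPay [∀ i, Finite (S i)] (hO : (rectSet O).Nonempty) (hV : 0 ≤ V)
    (h : UndomProfiles (U + V) ⊆ rectSet O) : ∃ F, ValidF O F ∧ kappa U O F ≤ maxPay V O := by
  have : ∀ i, Nonempty (S i) := fun i => hO.nonempty.map (· i)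
  choose! F hFO hF using undomProfiles_subset_rectSet_iff.1 h
  exact ⟨F, hFO, maxPay_mono hO (innerPay_le_of_dominates hV hF)⟩

end Kappa

section Promise

variable {ι : Type*} [DecidableEq ι] {S : ι → Type*} {U B : ι → (∀ j, S j) → ℝ}
  {O : ∀ i, Set (S i)} {F : ∀ i, S i → S i} {ε M : ℝ} {i : ι} {σ : ∀ j, S j}

open Classical in
/-- The payment promise which realizes `κ(F)` up to the slack `ε`: on `𝒪` it pays `innerPay + ε`,
and outside `𝒪` it pays the reward `B i σ` to those players `i` whose own strategy lies in `O_i`. -/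
noncomputable def promise (U : ι → (∀ j, S j) → ℝ) (O : ∀ i, Set (S i)) (F : ∀ i, S i → S i)
    (ε : ℝ) (B : ι → (∀ j, S j) → ℝ) (i : ι) (σ : ∀ j, S j) : ℝ :=
  if σ ∈ rectSet O then innerPay U O F i σ + ε else if σ i ∈ O i then B i σ else 0

theorem promise_of_mem_rectSet (hσ : σ ∈ rectSet O) :
    promise U O F ε B i σ = innerPay U O F i σ + ε := if_pos hσ

theorem promise_of_mem (hσ : σ ∉ rectSet O) (hi : σ i ∈ O i) :
    promise U O F ε B i σ = B i σ := (if_neg hσ).trans (if_pos hi)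

theorem promise_of_notMem (hi : σ i ∉ O i) : promise U O F ε B i σ = 0 :=
  (if_neg fun hσ => hi (hσ i)).trans (if_neg hi)

theorem promise_nonneg (hε : 0 ≤ ε) (hB : 0 ≤ B) : 0 ≤ promise U O F ε B := by
  intro i σ
  unfold promise
  split_ifs
  · exact add_nonneg (innerPay_nonneg i σ) hε
  · exact hB i σ
  · exact le_rfl

theorem lt_add_promise_of_mem_rectSet [Finite (S i)] (hε : 0 < ε) {x : S i} (hx : x ∉ O i)
    (hFx : F i x = σ i) (hσ : σ ∈ rectSet O) :
    U i (Function.update σ i x) < U i σ + promise U O F ε B i σ := by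
  rw [promise_of_mem_rectSet hσ]
  linarith [sub_le_innerPay (U := U) hx hFx]

theorem dominates_add_promise [Finite (S i)] (hO : (rectSet O).Nonempty) (hF : ValidF O F)
    (hε : 0 < ε) (hB : ∀ i σ τ, U i τ ≤ U i σ + B i σ) {x : S i} (hx : x ∉ O i) :
    Dominates (U + promise U O F ε B) i (F i x) x := by
  have hxpay (σ : ∀ j, S j) : (U + promise U O F ε B) i (Function.update σ i x) =
      U i (Function.update (Function.update σ i (F i x)) i x) := by
    rw [Pi.add_apply, Pi.add_apply, promise_of_notMem (by rwa [Function.update_self]), add_zero,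
      Function.update_idem]
  have hlt {σ : ∀ j, S j} (hσ : Function.update σ i (F i x) ∈ rectSet O) :
      (U + promise U O F ε B) i (Function.update σ i x) <
        (U + promise U O F ε B) i (Function.update σ i (F i x)) :=
    hxpay σ ▸ lt_add_promise_of_mem_rectSet hε hx (Function.update_self ..).symm hσ
  constructor
  · intro σ
    by_cases hσ : Function.update σ i (F i x) ∈ rectSet O
    · exact (hlt hσ).le
    · rw [hxpay, Pi.add_apply, Pi.add_apply,
        promise_of_mem hσ (by rw [Function.update_self]; exact hF i x hx)]
      exact hB i _ _
  · obtain ⟨o, ho⟩ := hO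
    exact ⟨o, hlt ((Function.forall_update_iff o fun j z => z ∈ O j).2
      ⟨hF i x hx, fun j _ => ho j⟩)⟩

theorem undomProfiles_add_promise_subset [∀ i, Finite (S i)] (hO : (rectSet O).Nonempty)
    (hF : ValidF O F) (hε : 0 < ε) (hB : ∀ i σ τ, U i τ ≤ U i σ + B i σ) :
    UndomProfiles (U + promise U O F ε B) ⊆ rectSet O :=
  have : ∀ i, Nonempty (S i) := fun i => hO.nonempty.map (· i)
  undomProfiles_subset_rectSet_iff.2 fun i x hx =>
    ⟨F i x, hF i x hx, dominates_add_promise hO hF hε hB hx⟩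

theorem exists_pos_forall_maxPay_promise_le [Fintype ι] [∀ i, Finite (S i)]
    (hO : (rectSet O).Nonempty) {c : ℝ} (hc : kappa U O F < c) :
    ∃ ε > 0, ∀ B, maxPay (promise U O F ε B) O ≤ c := by
  obtain ⟨ε, hε, hslack⟩ := exists_pos_mul_lt (sub_pos.2 hc) (Fintype.card ι : ℝ)
  refine ⟨ε, hε, fun B => maxPay_le hO fun o ho => ?_⟩
  calc ∑ i, promise U O F ε B i o
      = ∑ i, innerPay U O F i o + Fintype.card ι * ε := by
        simp only [promise_of_mem_rectSet ho, Finset.sum_add_distrib, Finset.sum_const,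
          Finset.card_univ, nsmul_eq_mul]
    _ ≤ kappa U O F + Fintype.card ι * ε := by
        rw [kappa_eq_maxPay_innerPay]
        gcongr
        exact sum_le_maxPay _ ho
    _ ≤ c := by linarith

theorem exists_implementation_maxPay_le [Fintype ι] [∀ i, Finite (S i)]
    (hO : (rectSet O).Nonempty) (hF : ValidF O F) {c : ℝ} (hc : kappa U O F < c) :
    ∃ V, 0 ≤ V ∧ UndomProfiles (U + V) ⊆ rectSet O ∧ maxPay V O ≤ c := by
  obtain ⟨M, hM, hU⟩ := exists_nonneg_forall_le_add U
  obtain ⟨ε, hε, hpay⟩ := exists_pos_forall_maxPay_promise_le hO hc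
  exact ⟨promise U O F ε fun _ _ => M, promise_nonneg hε.le fun _ _ => hM,
    undomProfiles_add_promise_subset hO hF hε hU, hpay _⟩

end Promise

section Equitable

variable {ι : Type*} {S : ι → Type*} {U : ι → (∀ j, S j) → ℝ} {O : ∀ i, Set (S i)}
  {F : ∀ i, S i → S i} {ε M : ℝ}

open Classical in
/-- A reward outside `𝒪` which makes each `x ∈ O_i` player `i`'s unique best reply to the opponents'
part of `g i x`, if `g` is a signature (see `IsSignature`) and no two utilities of a player differ
by more than `M`. -/
noncomputable def signatureReward (M : ℝ) (g : ∀ i, S i → ∀ j, S j) (i : ι) (σ : ∀ j, S j) : ℝ :=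
  if σ = g i (σ i) then 2 * M + 1 else M

theorem le_signatureReward (hM : 0 ≤ M) (g : ∀ i, S i → ∀ j, S j) (i : ι) (σ : ∀ j, S j) :
    M ≤ signatureReward M g i σ := by
  unfold signatureReward
  split_ifs <;> linarith

variable [DecidableEq ι]

/-- A choice, for each `x ∈ O_i`, of an opponent profile in `𝒳₋ᵢ ∖ 𝒪₋ᵢ`, different strategies
receiving different ones. It is encoded by full profiles `g i x` in which player `i` plays `x`. -/
structure IsSignature (O : ∀ i, Set (S i)) (g : ∀ i, S i → ∀ j, S j) : Prop where
  self_apply : ∀ i x, g i x i = x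
  exists_notMem : ∀ i, ∀ x ∈ O i, ∃ j ≠ i, g i x j ∉ O j
  eq_of_update_eq : ∀ i, ∀ x ∈ O i, ∀ y ∈ O i, Function.update (g i x) i y = g i y → y = x

theorem Equitable.exists_isSignature [Finite ι] [∀ i, Finite (S i)] [∀ i, Nonempty (S i)]
    (h : Equitable O) : ∃ g, IsSignature O g := by
  have hembed (i : ι) := (Set.toFinite (O i)).exists_injOn_of_encard_le
    (t := {σ : (j : {j : ι // j ≠ i}) → S j.1 | ∃ j, σ j ∉ O j.1}) (by
      rw [← (Set.toFinite _).cast_ncard_eq, ← (Set.toFinite _).cast_ncard_eq]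
      exact_mod_cast h i)
  choose g hg hinj using hembed
  refine ⟨fun i x => (Equiv.piSplitAt i S).symm (x, g i x), ⟨fun i x => ?_, fun i x hx => ?_,
    fun i x hx y hy hxy => hinj i hy hx (funext fun j => ?_)⟩⟩
  · simp
  · obtain ⟨j, hj⟩ := hg i hx
    exact ⟨j, j.2, by simpa [j.2] using hj⟩
  · simpa [j.2] using (congrFun hxy j.1).symm

theorem IsSignature.update_notMem_rectSet {g : ∀ i, S i → ∀ j, S j} (hg : IsSignature O g)
    {i : ι} {x : S i} (hx : x ∈ O i) (y : S i) : Function.update (g i x) i y ∉ rectSet O := by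
  obtain ⟨j, hji, hj⟩ := hg.exists_notMem i x hx
  exact fun h => hj (by simpa only [Function.update_of_ne hji] using h j)

theorem IsSignature.promise_self {g : ∀ i, S i → ∀ j, S j} (hg : IsSignature O g)
    {i : ι} {x : S i} (hx : x ∈ O i) :
    promise U O F ε (signatureReward M g) i (g i x) = 2 * M + 1 := by
  have hout : g i x ∉ rectSet O := by
    simpa only [Function.update_eq_self] using hg.update_notMem_rectSet hx (g i x i)
  rw [promise_of_mem hout (by rwa [hg.self_apply]), signatureReward, if_pos (by rw [hg.self_apply])]

theorem IsSignature.promise_update_le {g : ∀ i, S i → ∀ j, S j} (hg : IsSignature O g)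
    (hM : 0 ≤ M) {i : ι} {x y : S i} (hx : x ∈ O i) (hyx : y ≠ x) :
    promise U O F ε (signatureReward M g) i (Function.update (g i x) i y) ≤ M := by
  have hself : Function.update (g i x) i y i = y := Function.update_self ..
  by_cases hy : y ∈ O i
  · rw [promise_of_mem (hg.update_notMem_rectSet hx y) (by rwa [hself]), signatureReward, hself,
      if_neg (mt (hg.eq_of_update_eq i x hx y hy) hyx)]
  · rwa [promise_of_notMem (by rwa [hself])]

theorem IsSignature.undominated_add_promise {g : ∀ i, S i → ∀ j, S j} (hg : IsSignature O g)
    (hM : 0 ≤ M) (hU : ∀ i σ τ, U i τ ≤ U i σ + M) {i : ι} {x : S i} (hx : x ∈ O i) :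
    Undominated (U + promise U O F ε (signatureReward M g)) i x := by
  rw [← hg.self_apply i x]
  refine undominated_of_update_lt fun y hyx => ?_
  rw [hg.self_apply] at hyx
  have hgap := hU i (g i x) (Function.update (g i x) i y)
  have hy := hg.promise_update_le (U := U) (F := F) (ε := ε) hM hx hyx
  simp only [Pi.add_apply, hg.promise_self hx]
  linarith

theorem IsSignature.undomProfiles_add_promise_eq [∀ i, Finite (S i)] {g : ∀ i, S i → ∀ j, S j}
    (hg : IsSignature O g) (hO : (rectSet O).Nonempty) (hF : ValidF O F) (hε : 0 < ε)
    (hM : 0 ≤ M) (hU : ∀ i σ τ, U i τ ≤ U i σ + M) :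
    UndomProfiles (U + promise U O F ε (signatureReward M g)) = rectSet O := by
  refine (undomProfiles_add_promise_subset hO hF hε fun i σ τ => ?_).antisymm
    fun σ hσ i => hg.undominated_add_promise hM hU (hσ i)
  linarith [hU i σ τ, le_signatureReward hM g i σ]

theorem Equitable.exists_exact_implementation_maxPay_le [Fintype ι] [∀ i, Finite (S i)]
    (hE : Equitable O) (hO : (rectSet O).Nonempty) (hF : ValidF O F) {c : ℝ}
    (hc : kappa U O F < c) :
    ∃ V, 0 ≤ V ∧ UndomProfiles (U + V) = rectSet O ∧ maxPay V O ≤ c := by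
  have : ∀ i, Nonempty (S i) := fun i => hO.nonempty.map (· i)
  obtain ⟨g, hg⟩ := hE.exists_isSignature
  obtain ⟨M, hM, hU⟩ := exists_nonneg_forall_le_add U
  obtain ⟨ε, hε, hpay⟩ := exists_pos_forall_maxPay_promise_le hO hc
  exact ⟨promise U O F ε (signatureReward M g),
    promise_nonneg hε.le fun i σ => hM.trans (le_signatureReward hM g i σ),
    hg.undomProfiles_add_promise_eq hO hF hε hM hU, hpay _⟩

end Equitable

/-- the minimum of `max_{o ∈ 𝒪} Σ_i V_i(o)` over payment promises `V`
implementing the rectangular region `O` equals `min_{F ∈ ℱ} κ(F)`; moreover, if `G` is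
equitable w.r.t. `O`, then the minimum budget `δ ≥ 0` admitting an exact implementation
of `O` with cost at most `δ` also equals `min_{F ∈ ℱ} κ(F)`. -/
theorem min_implementation_cost {ι : Type*} [DecidableEq ι] [Fintype ι]
    {S : ι → Type*} [∀ i, Fintype (S i)] [∀ i, Nonempty (S i)]
    (U : ι → (∀ j, S j) → ℝ) (O : ∀ i, Set (S i)) (hO : ∀ i, (O i).Nonempty) :
    sInf {d : ℝ | ∃ V : ι → (∀ j, S j) → ℝ, (∀ i σ, 0 ≤ V i σ) ∧
          UndomProfiles (fun i σ => U i σ + V i σ) ⊆ rectSet O ∧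
          d = maxPay V O} =
      sInf {k : ℝ | ∃ F : ∀ i, S i → S i, ValidF O F ∧ k = kappa U O F} ∧
    (Equitable O →
      sInf {δ : ℝ | 0 ≤ δ ∧ ∃ V : ι → (∀ j, S j) → ℝ, (∀ i σ, 0 ≤ V i σ) ∧
            UndomProfiles (fun i σ => U i σ + V i σ) = rectSet O ∧
            gameCost U V ≤ δ} =
        sInf {k : ℝ | ∃ F : ∀ i, S i → S i, ValidF O F ∧ k = kappa U O F}) := by
  obtain ⟨o, ho⟩ := rectSet_nonempty hO
  have hne : {k : ℝ | ∃ F : ∀ i, S i → S i, ValidF O F ∧ k = kappa U O F}.Nonempty :=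
    ⟨_, fun i _ => o i, fun i _ _ => ho i, rfl⟩
  have hbdd : BddBelow {k : ℝ | ∃ F : ∀ i, S i → S i, ValidF O F ∧ k = kappa U O F} := by
    refine ⟨0, ?_⟩
    rintro _ ⟨F, -, rfl⟩
    exact kappa_nonneg
  refine ⟨csInf_eq_csInf_of_forall_exists_le_of_dense hne hbdd ?_ ?_,
    fun hE => csInf_eq_csInf_of_forall_exists_le_of_dense hne hbdd ?_ ?_⟩
  · rintro _ ⟨V, hV, hsub, rfl⟩
    obtain ⟨F, hF, hle⟩ := exists_kappa_le_maxPay ⟨o, ho⟩ hV hsub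
    exact ⟨_, ⟨F, hF, rfl⟩, hle⟩
  · rintro _ ⟨F, hF, rfl⟩ c hc
    obtain ⟨V, hV, hsub, hle⟩ := exists_implementation_maxPay_le ⟨o, ho⟩ hF hc
    exact ⟨_, ⟨V, hV, hsub, rfl⟩, hle⟩
  · rintro δ ⟨-, V, hV, hexact, hcost⟩
    obtain ⟨F, hF, hle⟩ := exists_kappa_le_maxPay ⟨o, ho⟩ hV hexact.subset
    exact ⟨_, ⟨F, hF, rfl⟩, hle.trans ((gameCost_eq_maxPay hexact).symm.le.trans hcost)⟩
  · rintro _ ⟨F, hF, rfl⟩ c hc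
    obtain ⟨V, hV, hexact, hle⟩ := hE.exists_exact_implementation_maxPay_le ⟨o, ho⟩ hF hc
    exact ⟨_, ⟨maxPay_nonneg hV, V, hV, hexact, (gameCost_eq_maxPay hexact).le⟩, hle⟩
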